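/- arXiv:2304.04454 — 3 statements merged into one kernel-verified Lean document; each statement's English description precedes it below -/
import Mathlib

section
/- Let T > 0, let α > 0 be a non-integer real number, let m = ⌈α⌉, and let f : ℝ → ℝ be a nonconstant, T-periodic, m-times continuously differentiable function. Define the Riemann–Liouville fractional derivative g(t) as the m-th iterated derivative, evaluated at t, of the function s ↦ (1/Γ(m−α)) ∫_0^s (s−τ)^{m−α−1} f(τ) dτ. Then g is not T-periodic on (0,∞); that is, it is NOT the case that g(t+T) = g(t) for all t > 0. -/
open Real MeasureTheory intervalIntegral

/-!
For a `T`-periodic function `f`, translating the fractional integral by one period leaves only a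
memory term: `I^β f (t + T) - I^β f t = (1 / Γ(β)) ∫_0^T (t + T - τ)^(β - 1) f(τ) dτ`. If the
`m`-th derivative of `I^β f` were `T`-periodic, the `m`-th derivative of the memory term would
vanish for `t > 0`. Differentiating further under the integral sign, with coefficients that are
nonzero because `β` is not an integer, shows that `(t + T - τ)^r f(τ)` is orthogonal on `[0, T]`
to all powers of the injective function `τ ↦ (t + T - τ)⁻¹`, so `f = 0` by the Stone–Weierstrass
theorem.

The substitution `τ = s x` gives `I^β f (s) = (s^β / Γ(β)) ∫_0^1 (1 - x)^(β - 1) f(s x) dx`, in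
which the singularity of the kernel no longer moves with `s`; hence `I^β f` is as smooth as `f` on
`(0, ∞)`.
-/

open Filter Set
open scoped BoundedContinuousFunction Convolution Topology

variable {E : Type*} [NormedAddCommGroup E] [NormedSpace ℝ E]

section Moments

variable {X : Type*} [TopologicalSpace X] [MeasurableSpace X] {μ : Measure X} {φ : X → E}

lemma ae_eq_zero_of_forall_integral_boundedContinuousFunction_smul_eq_zero [CompleteSpace E]
    [BorelSpace X] [HasOuterApproxClosed X] (hφ : Integrable φ μ)
    (h : ∀ g : X →ᵇ ℝ, ∫ x, g x • φ x ∂μ = 0) : φ =ᵐ[μ] 0 := by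
  refine ae_eq_zero_of_forall_setIntegral_isClosed_eq_zero hφ fun s hs => ?_
  have hle : ∀ n x, ‖(hs.apprSeq n x : ℝ)‖ ≤ 1 := fun n x => by
    rw [NNReal.norm_eq]
    exact HasOuterApproxClosed.apprSeq_apply_le_one hs n x
  have hzero : ∀ n, ∫ x, (hs.apprSeq n x : ℝ) • φ x ∂μ = 0 := fun n =>
    h (.ofNormedAddCommGroup (fun x => hs.apprSeq n x) (by fun_prop) 1 (hle n))
  have hlim : Tendsto (fun n => ∫ x, (hs.apprSeq n x : ℝ) • φ x ∂μ) atTop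
      (𝓝 (∫ x, s.indicator φ x ∂μ)) := by
    refine tendsto_integral_of_dominated_convergence (fun x => ‖φ x‖) (fun n => ?_) hφ.norm
      (fun n => .of_forall fun x => ?_) (.of_forall fun x => ?_)
    · exact (Continuous.aestronglyMeasurable (by fun_prop)).smul hφ.aestronglyMeasurable
    · rw [norm_smul]
      exact mul_le_of_le_one_left (norm_nonneg _) (hle n x)
    · have hx := tendsto_pi_nhds.1 (HasOuterApproxClosed.tendsto_apprSeq hs) x
      have hind : s.indicator φ x = ((s.indicator (fun _ => 1) x : NNReal) : ℝ) • φ x := by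
        by_cases hxs : x ∈ s <;> simp [hxs]
      rw [hind]
      exact ((NNReal.continuous_coe.tendsto _).comp hx).smul_const (φ x)
  rw [← MeasureTheory.integral_indicator hs.measurableSet]
  exact tendsto_nhds_unique hlim (by simp only [hzero, tendsto_const_nhds])

lemma integral_continuousMap_smul_eq_zero_of_forall_integral_pow_smul_eq_zero [CompactSpace X]
    [OpensMeasurableSpace X] (hφ : Integrable φ μ) {u : C(X, ℝ)} (hu : Function.Injective u)
    (h : ∀ n : ℕ, ∫ x, u x ^ n • φ x ∂μ = 0) (g : C(X, ℝ)) : ∫ x, g x • φ x ∂μ = 0 := by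
  have hint : ∀ g : C(X, ℝ), Integrable (fun x => g x • φ x) μ := fun g =>
    hφ.bdd_smul ‖g‖ g.continuous.aestronglyMeasurable (.of_forall g.norm_coe_le_norm)
  let L : C(X, ℝ) →L[ℝ] E := LinearMap.mkContinuous
    { toFun := fun g => ∫ x, g x • φ x ∂μ
      map_add' := fun g₁ g₂ => by
        simp only [ContinuousMap.add_apply, add_smul, integral_add (hint g₁) (hint g₂)]
      map_smul' := fun c g => by
        simp only [ContinuousMap.smul_apply, smul_assoc, MeasureTheory.integral_smul,
          RingHom.id_apply] }
    (∫ x, ‖φ x‖ ∂μ) fun g => by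
      rw [mul_comm, ← MeasureTheory.integral_const_mul]
      refine norm_integral_le_of_norm_le (hφ.norm.const_mul _) (.of_forall fun x => ?_)
      rw [norm_smul]
      gcongr
      exact g.norm_coe_le_norm x
  have hpoly : ∀ p : Polynomial ℝ, L (p.aeval u) = 0 := fun p => by
    rw [Polynomial.aeval_eq_sum_range, map_sum]
    refine Finset.sum_eq_zero fun n _ => ?_
    rw [map_smul, show L (u ^ n) = 0 from h n, smul_zero]
  have hdense : (Algebra.adjoin ℝ {u}).topologicalClosure = ⊤ :=
    ContinuousMap.subalgebra_topologicalClosure_eq_top_of_separatesPoints _ fun x y hxy =>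
      ⟨u, ⟨u, Algebra.self_mem_adjoin_singleton ℝ u, rfl⟩, hu.ne hxy⟩
  have hg : g ∈ closure (Algebra.adjoin ℝ {u} : Set C(X, ℝ)) := by
    rw [← Subalgebra.topologicalClosure_coe, hdense]
    trivial
  refine (isClosed_singleton.preimage L.continuous).closure_subset_iff.2 ?_ hg
  rw [Algebra.adjoin_singleton_eq_range_aeval]
  rintro _ ⟨p, rfl⟩
  exact hpoly p

lemma ae_eq_zero_of_forall_integral_pow_smul_eq_zero [CompleteSpace E] [CompactSpace X]
    [BorelSpace X] [HasOuterApproxClosed X] (hφ : Integrable φ μ) {u : C(X, ℝ)}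
    (hu : Function.Injective u) (h : ∀ n : ℕ, ∫ x, u x ^ n • φ x ∂μ = 0) : φ =ᵐ[μ] 0 :=
  ae_eq_zero_of_forall_integral_boundedContinuousFunction_smul_eq_zero hφ fun g =>
    integral_continuousMap_smul_eq_zero_of_forall_integral_pow_smul_eq_zero hφ hu h
      g.toContinuousMap

end Moments

lemma eqOn_zero_of_forall_intervalIntegral_pow_smul_eq_zero [CompleteSpace E] {a b : ℝ}
    (hab : a < b) {u : ℝ → ℝ} {φ : ℝ → E} (hφ : ContinuousOn φ (Icc a b))
    (hu : ContinuousOn u (Icc a b)) (hinj : InjOn u (Icc a b))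
    (h : ∀ n : ℕ, ∫ x in a..b, u x ^ n • φ x = 0) : EqOn φ 0 (Icc a b) := by
  refine Measure.eqOn_Icc_of_ae_eq volume hab.ne ?_ hφ continuousOn_const
  refine (ae_restrict_iff_subtype measurableSet_Icc).2
    (ae_eq_zero_of_forall_integral_pow_smul_eq_zero (u := ⟨_, hu.domRestrict⟩) ?_
      hinj.injective fun n => ?_)
  · exact (integrableOn_iff_comap_subtypeVal measurableSet_Icc).1 hφ.integrableOn_Icc
  · rw [← h n, integral_of_le hab.le, ← integral_Icc_eq_integral_Ioc]
    exact integral_subtype_comap measurableSet_Icc fun x => u x ^ n • φ x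

lemma contDiff_intervalIntegral_smul {P : Type*} [NormedAddCommGroup P] [NormedSpace ℝ P]
    {n : ℕ∞} {a b : ℝ} {w : ℝ → ℝ} {K : P → ℝ → E} (hw : IntervalIntegrable w volume a b)
    (hK : ContDiff ℝ n ↿K) : ContDiff ℝ n fun p => ∫ x in a..b, w x • K p x := by
  obtain ⟨R, hR, hsub⟩ := (isCompact_uIcc (a := a) (b := b)).isBounded.subset_closedBall_lt 0 0
  -- Cutting `K` off outside `[[a, b]]` turns the integral into a convolution evaluated at `0`.
  let χ : ContDiffBump (0 : ℝ) := ⟨R, R + 1, hR, lt_add_one R⟩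
  have hχ : ∀ x ∈ uIoc a b, χ x = 1 := fun x hx =>
    χ.one_of_mem_closedBall (hsub (uIoc_subset_uIcc hx))
  have hconv : ContDiffOn ℝ n (fun p => ((uIoc a b).indicator w ⋆[.lsmul ℝ ℝ, volume]
      fun y => χ y • K p (-y)) 0) univ := by
    refine contDiffOn_convolution_right_with_param_comp (k := Metric.closedBall 0 (R + 1))
      (v := fun _ => 0) (g := fun p y => χ y • K p (-y)) _ contDiffOn_const isOpen_univ
      (isCompact_closedBall 0 _) (fun p y _ hy => ?_) ?_ ?_
    · rw [χ.zero_of_le_dist (le_of_not_ge hy), zero_smul]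
    · exact ((integrable_indicator_iff measurableSet_uIoc).2 hw.def').locallyIntegrable
    · exact ContDiff.contDiffOn ((χ.contDiff.comp contDiff_snd).smul
        (hK.comp (contDiff_fst.prodMk contDiff_snd.neg)))
  have hint : ∀ p, ((uIoc a b).indicator w ⋆[.lsmul ℝ ℝ, volume]
      fun y => χ y • K p (-y)) 0 = ∫ x in uIoc a b, w x • K p x := fun p => by
    rw [← MeasureTheory.integral_indicator measurableSet_uIoc]
    refine integral_congr_ae (.of_forall fun x => ?_)
    by_cases hx : x ∈ uIoc a b
    · simp [hx, hχ x hx, χ.neg]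
    · simp [hx]
  simp only [intervalIntegral_eq_integral_uIoc, ← hint]
  exact (contDiffOn_univ.1 hconv).const_smul _

section Kernel

variable {r a b t : ℝ} {f : ℝ → E}

lemma hasDerivAt_integral_sub_rpow_smul (ht : a ⊔ b < t) (hf : IntervalIntegrable f volume a b) :
    HasDerivAt (fun t => ∫ τ in a..b, (t - τ) ^ r • f τ)
      (r • ∫ τ in a..b, (t - τ) ^ (r - 1) • f τ) t := by
  obtain ⟨c, hc, hct⟩ := exists_between ht
  have hne : ∀ x, c ≤ x → ∀ τ ∈ uIcc a b, x - τ ≠ 0 := fun x hx τ hτ =>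
    (sub_pos.2 (hτ.2.trans_lt (hc.trans_le hx))).ne'
  have hint : ∀ q x : ℝ, c ≤ x → IntervalIntegrable (fun τ => (x - τ) ^ q • f τ) volume a b :=
    fun q x hx => hf.continuousOn_smul
      (ContinuousOn.rpow_const (by fun_prop) fun τ hτ => .inl (hne x hx τ hτ))
  obtain ⟨C, hC⟩ := (isCompact_Icc.prod isCompact_uIcc).exists_bound_of_continuousOn
    (s := Icc c (t + 1) ×ˢ uIcc a b) (f := fun p : ℝ × ℝ => r * (p.1 - p.2) ^ (r - 1))
    (continuousOn_const.mul (ContinuousOn.rpow_const (by fun_prop)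
      fun p hp => .inl (hne p.1 hp.1.1 p.2 hp.2)))
  rw [← intervalIntegral.integral_smul]
  simp only [smul_smul]
  refine (hasDerivAt_integral_of_dominated_loc_of_deriv_le
    (F' := fun x τ => (r * (x - τ) ^ (r - 1)) • f τ) (bound := fun τ => C * ‖f τ‖)
    (Icc_mem_nhds hct (lt_add_one t)) ?_ (hint r t hct.le) ?_ (.of_forall fun τ hτ x hx => ?_)
    (hf.norm.const_mul C) (.of_forall fun τ hτ x hx => ?_)).2
  · filter_upwards [eventually_ge_nhds hct] with x hx
    exact (hint r x hx).aestronglyMeasurable_restrict_uIoc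
  · simpa only [Pi.smul_def, smul_smul] using
      ((hint (r - 1) t hct.le).smul r).aestronglyMeasurable_restrict_uIoc
  · rw [norm_smul]
    gcongr
    exact hC (x, τ) ⟨hx, uIoc_subset_uIcc hτ⟩
  · simpa only [id, one_mul] using (((hasDerivAt_id x).sub_const τ).rpow_const
      (.inl (hne x hx.1 τ (uIoc_subset_uIcc hτ)))).smul_const (f τ)

lemma iteratedDeriv_integral_sub_rpow_smul (n : ℕ) (ht : a ⊔ b < t)
    (hf : IntervalIntegrable f volume a b) :
    iteratedDeriv n (fun t => ∫ τ in a..b, (t - τ) ^ r • f τ) t =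
      (descPochhammer ℝ n).eval r • ∫ τ in a..b, (t - τ) ^ (r - n) • f τ := by
  induction n generalizing t with
  | zero => simp
  | succ n ih =>
    have hev : iteratedDeriv n (fun t => ∫ τ in a..b, (t - τ) ^ r • f τ) =ᶠ[𝓝 t]
        fun t => (descPochhammer ℝ n).eval r • ∫ τ in a..b, (t - τ) ^ (r - n) • f τ := by
      filter_upwards [lt_mem_nhds ht] with x hx using ih hx
    rw [iteratedDeriv_succ, hev.deriv_eq,
      ((hasDerivAt_integral_sub_rpow_smul ht hf).fun_const_smul _).deriv, smul_smul,
      descPochhammer_succ_eval, sub_sub, Nat.cast_succ]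

lemma descPochhammer_eval_ne_zero {R : Type*} [CommRing R] [IsDomain R] {r : R} (n : ℕ)
    (hr : ∀ k : ℕ, r ≠ k) : (descPochhammer R n).eval r ≠ 0 := by
  rw [descPochhammer_eval_eq_prod_range]
  exact Finset.prod_ne_zero_iff.2 fun k _ => sub_ne_zero.2 (hr k)

lemma integral_sub_rpow_sub_natCast_smul_eq_zero (hr : ∀ k : ℕ, r ≠ k) (ht : a ⊔ b < t)
    (hf : IntervalIntegrable f volume a b)
    (h : ∀ᶠ s in 𝓝 t, ∫ τ in a..b, (s - τ) ^ r • f τ = 0) (n : ℕ) :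
    ∫ τ in a..b, (t - τ) ^ (r - n) • f τ = 0 := by
  have hzero : iteratedDeriv n (fun s => ∫ τ in a..b, (s - τ) ^ r • f τ) t = 0 := by
    rw [EventuallyEq.iteratedDeriv_eq (g := fun _ => 0) n h, iteratedDeriv_fun_const_zero]
  rw [iteratedDeriv_integral_sub_rpow_smul n ht hf] at hzero
  exact (smul_eq_zero.1 hzero).resolve_left (descPochhammer_eval_ne_zero n hr)

lemma eqOn_zero_of_eventually_integral_sub_rpow_smul_eq_zero [CompleteSpace E]
    (hr : ∀ k : ℕ, r ≠ k) (hab : a < b) (ht : b < t) (hf : ContinuousOn f (Icc a b))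
    (h : ∀ᶠ s in 𝓝 t, ∫ τ in a..b, (s - τ) ^ r • f τ = 0) : EqOn f 0 (Icc a b) := by
  have hpos : ∀ τ ∈ Icc a b, 0 < t - τ := fun τ hτ => sub_pos.2 (hτ.2.trans_lt ht)
  have hweight : ContinuousOn (fun τ => (t - τ) ^ r) (Icc a b) :=
    ContinuousOn.rpow_const (by fun_prop) fun τ hτ => .inl (hpos τ hτ).ne'
  have hinv : ContinuousOn (fun τ => (t - τ)⁻¹) (Icc a b) :=
    ContinuousOn.inv₀ (by fun_prop) fun τ hτ => (hpos τ hτ).ne'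
  have hmoment : ∀ n : ℕ, ∫ τ in a..b, (t - τ)⁻¹ ^ n • (t - τ) ^ r • f τ = 0 := fun n => by
    rw [← integral_sub_rpow_sub_natCast_smul_eq_zero hr (by rwa [sup_of_le_right hab.le])
      (hf.intervalIntegrable_of_Icc hab.le) h n]
    refine integral_congr fun τ hτ => ?_
    rw [uIcc_of_le hab.le] at hτ
    simp only [smul_smul, rpow_sub (hpos τ hτ), rpow_natCast, inv_pow, div_eq_inv_mul]
  intro τ hτ
  exact (smul_eq_zero.1 (eqOn_zero_of_forall_intervalIntegral_pow_smul_eq_zero hab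
    (hweight.smul hf) hinv (inv_injective.comp sub_right_injective).injOn hmoment hτ)).resolve_left
    (rpow_pos_of_pos (hpos τ hτ) r).ne'

end Kernel

/-- The Riemann–Liouville fractional integral of order `β` with base point `0`. For `α < m`, the
Riemann–Liouville fractional derivative of order `α` is the `m`-th derivative of the fractional
integral of order `m - α`. -/
noncomputable def riemannLiouvilleIntegral (β : ℝ) (f : ℝ → E) (s : ℝ) : E :=
  (1 / Gamma β) • ∫ τ in (0 : ℝ)..s, (s - τ) ^ (β - 1) • f τ

section RiemannLiouville

variable {β T t : ℝ} {f : ℝ → E}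

lemma intervalIntegrable_sub_rpow {r : ℝ} (hr : -1 < r) (s a b : ℝ) :
    IntervalIntegrable (fun τ => (s - τ) ^ r) volume a b := by
  simpa using (intervalIntegrable_rpow' (a := s - a) (b := s - b) hr).comp_sub_left s

lemma integral_sub_rpow_smul_eq_rpow_smul_integral {r : ℝ} (ht : 0 < t) (f : ℝ → E) :
    ∫ τ in (0 : ℝ)..t, (t - τ) ^ r • f τ =
      t ^ (r + 1) • ∫ x in (0 : ℝ)..1, (1 - x) ^ r • f (t * x) := by
  have hdil := smul_integral_comp_mul_left (a := 0) (b := 1) (fun τ => (t - τ) ^ r • f τ) t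
  rw [mul_zero, mul_one] at hdil
  rw [← hdil, rpow_add_one ht.ne', mul_comm, mul_smul, ← intervalIntegral.integral_smul (t ^ r)]
  congr 1
  refine integral_congr fun x hx => ?_
  rw [uIcc_of_le zero_le_one] at hx
  simp only [smul_smul, ← mul_rpow ht.le (sub_nonneg.2 hx.2), mul_one_sub]

lemma contDiffAt_riemannLiouvilleIntegral {n : ℕ∞} (hβ : 0 < β) (hf : ContDiff ℝ n f)
    (ht : 0 < t) : ContDiffAt ℝ n (riemannLiouvilleIntegral β f) t := by
  have hweight : IntervalIntegrable (fun x : ℝ => (1 - x) ^ (β - 1)) volume 0 1 :=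
    intervalIntegrable_sub_rpow (by linarith) 1 0 1
  have hdil : ContDiff ℝ n fun s => ∫ x in (0 : ℝ)..1, (1 - x) ^ (β - 1) • f (s * x) :=
    contDiff_intervalIntegral_smul hweight (hf.comp (contDiff_fst.mul contDiff_snd))
  have hprod : ContDiffAt ℝ n (fun s => (1 / Gamma β) • s ^ (β - 1 + 1) •
      ∫ x in (0 : ℝ)..1, (1 - x) ^ (β - 1) • f (s * x)) t :=
    ((contDiffAt_rpow_const_of_ne ht.ne').smul hdil.contDiffAt).const_smul (1 / Gamma β)
  refine hprod.congr_of_eventuallyEq ?_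
  filter_upwards [lt_mem_nhds ht] with s hs
  rw [riemannLiouvilleIntegral, integral_sub_rpow_smul_eq_rpow_smul_integral hs]

lemma riemannLiouvilleIntegral_add_period (hβ : 0 < β) (hf : Continuous f)
    (hper : Function.Periodic f T) (t : ℝ) :
    riemannLiouvilleIntegral β f (t + T) = riemannLiouvilleIntegral β f t +
      (1 / Gamma β) • ∫ τ in (0 : ℝ)..T, (t + T - τ) ^ (β - 1) • f τ := by
  have hint : ∀ a b, IntervalIntegrable (fun τ => (t + T - τ) ^ (β - 1) • f τ) volume a b :=
    fun a b => (intervalIntegrable_sub_rpow (by linarith) _ a b).smul_continuousOn hf.continuousOn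
  have hshift : ∫ τ in T..t + T, (t + T - τ) ^ (β - 1) • f τ =
      ∫ τ in (0 : ℝ)..t, (t - τ) ^ (β - 1) • f τ := by
    have hsubst := integral_comp_add_right (a := 0) (b := t)
      (fun τ => (t + T - τ) ^ (β - 1) • f τ) T
    rw [zero_add] at hsubst
    rw [← hsubst]
    simp only [hper _, add_sub_add_right_eq_sub]
  rw [riemannLiouvilleIntegral, riemannLiouvilleIntegral,
    ← integral_add_adjacent_intervals (hint 0 T) (hint T (t + T)), hshift, smul_add, add_comm]

lemma iteratedDeriv_riemannLiouvilleIntegral_add_period {n : ℕ} (hβ : 0 < β) (hT : 0 < T)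
    (hf : ContDiff ℝ n f) (hper : Function.Periodic f T) (ht : 0 < t) :
    iteratedDeriv n (riemannLiouvilleIntegral β f) (t + T) =
      iteratedDeriv n (riemannLiouvilleIntegral β f) t +
        (1 / Gamma β * (descPochhammer ℝ n).eval (β - 1)) •
          ∫ τ in (0 : ℝ)..T, (t + T - τ) ^ (β - 1 - n) • f τ := by
  have hsmooth : ∀ s, 0 < s → ContDiffAt ℝ n (riemannLiouvilleIntegral β f) s := fun s hs =>
    contDiffAt_riemannLiouvilleIntegral (n := n) hβ (mod_cast hf) hs
  have hshift : ContDiffAt ℝ n (fun s => riemannLiouvilleIntegral β f (s + T)) t :=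
    ContDiffAt.comp (g := riemannLiouvilleIntegral β f) (f := fun s => s + T) t
      (hsmooth (t + T) (by positivity)) (by fun_prop)
  have hmemory : (fun s => riemannLiouvilleIntegral β f (s + T) - riemannLiouvilleIntegral β f s) =
      fun s => (1 / Gamma β) • ∫ τ in (0 : ℝ)..T, (s + T - τ) ^ (β - 1) • f τ := by
    funext s
    rw [riemannLiouvilleIntegral_add_period hβ hf.continuous hper, add_sub_cancel_left]
  have hcomp : ∀ h : ℝ → E, iteratedDeriv n (fun s => h (s + T)) t = iteratedDeriv n h (t + T) :=
    fun h => congrFun (iteratedDeriv_comp_add_const n h T) t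
  rw [← sub_eq_iff_eq_add', ← hcomp, ← iteratedDeriv_fun_sub hshift (hsmooth t ht), hmemory,
    iteratedDeriv_fun_const_smul_field, mul_smul,
    hcomp fun s => ∫ τ in (0 : ℝ)..T, (s - τ) ^ (β - 1) • f τ,
    iteratedDeriv_integral_sub_rpow_smul n (by rw [sup_of_le_right hT.le]; linarith)
      (hf.continuous.intervalIntegrable 0 T)]

end RiemannLiouville

theorem riemannLiouville_not_periodic_general [CompleteSpace E] {T α : ℝ} (hT : 0 < T)
    (hα : ∀ n : ℤ, α ≠ n) {m : ℕ} (hαm : α < m) {f : ℝ → E} (hper : Function.Periodic f T)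
    (hf : ContDiff ℝ m f) (hf0 : f ≠ 0) :
    ¬ ∀ t, 0 < t → iteratedDeriv m (riemannLiouvilleIntegral (m - α) f) (t + T) =
      iteratedDeriv m (riemannLiouvilleIntegral (m - α) f) t := by
  intro hg
  have hβ : 0 < m - α := sub_pos.2 hαm
  have hΓ : 1 / Gamma (m - α) ≠ 0 := one_div_ne_zero (Gamma_pos_of_pos hβ).ne'
  have hexp : ∀ k : ℕ, (m : ℝ) - α - 1 ≠ k := fun k hk =>
    hα (m - 1 - k) (by push_cast; linarith)
  have hexp_sub : ∀ k : ℕ, (m : ℝ) - α - 1 - m ≠ k := fun k hk =>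
    hα (-1 - k) (by push_cast; linarith)
  have hmemory : ∀ s, T < s → ∫ τ in (0 : ℝ)..T, (s - τ) ^ (m - α - 1 - m) • f τ = 0 :=
    fun s hs => by
      have := iteratedDeriv_riemannLiouvilleIntegral_add_period hβ hT hf hper (sub_pos.2 hs)
      rw [hg _ (sub_pos.2 hs), left_eq_add, sub_add_cancel] at this
      exact (smul_eq_zero.1 this).resolve_left
        (mul_ne_zero hΓ (descPochhammer_eval_ne_zero m hexp))
  have hzero : EqOn f 0 (Icc 0 T) := eqOn_zero_of_eventually_integral_sub_rpow_smul_eq_zero hexp_sub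
    hT (lt_add_one T) hf.continuous.continuousOn
    ((lt_mem_nhds (lt_add_one T)).mono hmemory)
  refine hf0 (funext fun t => ?_)
  obtain ⟨s, hs, hts⟩ := hper.exists_mem_Ico₀ hT t
  rw [hts, hzero (Ico_subset_Icc_self hs), Pi.zero_apply, Pi.zero_apply]

/-- The Riemann–Liouville fractional derivative of a nonconstant
`T`-periodic, `m`-times continuously differentiable function is not `T`-periodic
on `(0, ∞)`. -/
theorem riemannLiouville_not_periodic
    (T α : ℝ) (hT : 0 < T) (hα : 0 < α) (hαZ : ∀ n : ℤ, α ≠ (n : ℝ))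
    (m : ℕ) (hm : m = ⌈α⌉₊)
    (f : ℝ → ℝ) (hper : ∀ t : ℝ, f (t + T) = f t)
    (hnc : ∃ t₁ t₂ : ℝ, f t₁ ≠ f t₂)
    (hsm : ContDiff ℝ m f)
    (g : ℝ → ℝ)
    (hg : ∀ t : ℝ, g t =
      iteratedDeriv m (fun s : ℝ =>
        (1 / Real.Gamma ((m : ℝ) - α)) *
          ∫ τ in (0:ℝ)..s, (s - τ) ^ ((m : ℝ) - α - 1) * f τ) t) :
    ¬ (∀ t : ℝ, 0 < t → g (t + T) = g t) := by
  have hαm : α < m := (hm ▸ Nat.le_ceil α).lt_of_ne (mod_cast hαZ m)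
  have hf0 : f ≠ 0 := by rintro rfl; simp at hnc
  simp only [hg]
  exact riemannLiouville_not_periodic_general hT hαZ hαm hper hsm hf0
end

section
/- Let α > 0 be a non-integer real number, let m = ⌈α⌉, let L > 0, let T > 0, and let f : ℝ → ℝ be a T-periodic, m-times continuously differentiable function. Then the Caputo fractional derivative with sliding fixed memory length L, namely the function t ↦ (1/Γ(m−α)) ∫_{t−L}^{t} (t−τ)^{m−α−1} f^{(m)}(τ) dτ, is T-periodic on ℝ. -/
open Real MeasureTheory intervalIntegral

section Periodic

variable {𝕜 F : Type*} [NontriviallyNormedField 𝕜] [NormedAddCommGroup F] [NormedSpace 𝕜 F]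

theorem periodic_iteratedDeriv {f : 𝕜 → F} {T : 𝕜} (hf : Function.Periodic f T) (n : ℕ) :
    Function.Periodic (iteratedDeriv n f) T := fun x ↦ by
  rw [← congrFun (iteratedDeriv_comp_add_const n f T) x, hf.funext]

end Periodic

section SlidingWindow

variable {E : Type*} [NormedAddCommGroup E] [NormedSpace ℝ E]

theorem periodic_integral_slidingWindow {K : ℝ → ℝ → E} {T : ℝ}
    (hK : ∀ t τ, K (t + T) (τ + T) = K t τ) (L : ℝ) :
    Function.Periodic (fun t ↦ ∫ τ in (t - L)..t, K t τ) T := fun t ↦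
  calc ∫ τ in (t + T - L)..(t + T), K (t + T) τ
      = ∫ τ in (t - L + T)..(t + T), K (t + T) τ := by rw [sub_add_eq_add_sub]
    _ = ∫ τ in (t - L)..t, K (t + T) (τ + T) := (integral_comp_add_right _ T).symm
    _ = ∫ τ in (t - L)..t, K t τ := by simp only [hK]

/-- The Caputo fractional derivative of order `α` of `f` with sliding memory length `L`. The
order `m` of the inner derivative is a separate argument, classically `⌈α⌉₊`; the kernel is
integrable at its singularity `τ = t` exactly when `α < m`. -/
noncomputable def caputoSlidingDeriv (α : ℝ) (m : ℕ) (L : ℝ) (f : ℝ → E) (t : ℝ) : E :=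
  (1 / Real.Gamma (m - α)) • ∫ τ in (t - L)..t, (t - τ) ^ ((m : ℝ) - α - 1) • iteratedDeriv m f τ

theorem caputo_sliding_memory_periodic_general [CompleteSpace E] {α : ℝ} {m : ℕ} (_hαm : α < m)
    {L : ℝ} (_hL : 0 ≤ L) {f : ℝ → E} {T : ℝ} (hf : Function.Periodic f T) :
    Function.Periodic (caputoSlidingDeriv α m L f) T := by
  have kernel_diagonal (t τ : ℝ) :
      (t + T - (τ + T)) ^ ((m : ℝ) - α - 1) • iteratedDeriv m f (τ + T) =
        (t - τ) ^ ((m : ℝ) - α - 1) • iteratedDeriv m f τ := by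
    rw [add_sub_add_right_eq_sub, periodic_iteratedDeriv hf]
  exact (periodic_integral_slidingWindow kernel_diagonal L).smul _

end SlidingWindow

/-- The Caputo fractional derivative with sliding fixed memory length `L`
of a `T`-periodic, `m`-times continuously differentiable function is `T`-periodic on `ℝ`. -/
theorem caputo_sliding_memory_periodic
    (α : ℝ) (hα : 0 < α) (hαZ : ∀ n : ℤ, α ≠ (n : ℝ))
    (m : ℕ) (hm : m = ⌈α⌉₊)
    (L T : ℝ) (hL : 0 < L) (hT : 0 < T)
    (f : ℝ → ℝ) (hper : ∀ t : ℝ, f (t + T) = f t)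
    (hsm : ContDiff ℝ m f) :
    ∀ t : ℝ,
      (1 / Real.Gamma ((m : ℝ) - α)) *
          ∫ τ in (t + T - L)..(t + T), (t + T - τ) ^ ((m : ℝ) - α - 1) * iteratedDeriv m f τ
        = (1 / Real.Gamma ((m : ℝ) - α)) *
            ∫ τ in (t - L)..t, (t - τ) ^ ((m : ℝ) - α - 1) * iteratedDeriv m f τ := by
  have hαm : α < m := (hm ▸ Nat.le_ceil α).lt_of_ne (mod_cast hαZ m)
  exact caputo_sliding_memory_periodic_general hαm hL.le hper
end

section
/- Let ψ denote the digamma function, ψ(x) = d/dx [ln Γ(x)], and let γ be the Euler–Mascheroni constant. Then for every α ∈ (0,1): 1 − α < exp(ψ(2−α)) and ψ(2−α) < 1 − γ; in particular exp(ψ(2−α)) < exp(1−γ). -/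
open Real

/-!
Since `Γ` is log-convex, `ψ` is monotone on `(0, ∞)`, and the functional equation
`ψ x = ψ (x + 1) - 1 / x` upgrades this to strict monotonicity. The upper bound compares `ψ (2 - α)`
with `ψ 2 = 1 - γ`. For the lower bound, `log x = log Γ(x + 1) - log Γ(x)` is the slope of a secant
of the strictly convex function `log Γ`, hence less than its derivative `ψ (x + 1)` at the right
endpoint.
-/

/-- The digamma function of a real variable, the real counterpart of `Complex.digamma`. Since
`Real.log` is `log |·|`, this is `Γ' / Γ` on the negative axis as well, away from the poles. -/
noncomputable def digamma (x : ℝ) : ℝ := deriv (fun s : ℝ => log (Gamma s)) x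

theorem ofReal_digamma {x : ℝ} (hx : ∀ m : ℕ, x ≠ -m) :
    (digamma x : ℂ) = Complex.digamma x := by
  have hderiv : ((deriv Gamma x : ℝ) : ℂ) = deriv Complex.Gamma x := by
    have hreal := (differentiableAt_Gamma hx).hasDerivAt.ofReal_comp
    have hcomplex :=
      (Complex.differentiableAt_Gamma x fun m => mod_cast hx m).hasDerivAt.comp_ofReal
    simp only [Complex.Gamma_ofReal] at hcomplex
    exact hreal.unique hcomplex
  rw [digamma, deriv.log (differentiableAt_Gamma hx) (Gamma_ne_zero hx), Complex.ofReal_div, hderiv,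
    ← Complex.Gamma_ofReal, Complex.digamma_def, logDeriv_apply]

theorem digamma_add_one {x : ℝ} (hx : ∀ m : ℕ, x ≠ -m) :
    digamma (x + 1) = digamma x + x⁻¹ := by
  have hx' : ∀ m : ℕ, x + 1 ≠ -m := fun m h => hx (m + 1) (by push_cast; linarith)
  have h := Complex.digamma_apply_add_one x fun m => mod_cast hx m
  rw [← Complex.ofReal_one, ← Complex.ofReal_add, ← ofReal_digamma hx', ← ofReal_digamma hx] at h
  exact_mod_cast h

theorem ne_neg_natCast_of_pos {x : ℝ} (hx : 0 < x) (m : ℕ) : x ≠ -m :=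
  ((neg_nonpos.2 m.cast_nonneg).trans_lt hx).ne'

theorem digamma_one : digamma 1 = -eulerMascheroniConstant := by
  have h := ofReal_digamma (ne_neg_natCast_of_pos one_pos)
  rw [Complex.ofReal_one, Complex.digamma_one] at h
  exact_mod_cast h

theorem digamma_two : digamma 2 = 1 - eulerMascheroniConstant := by
  rw [← one_add_one_eq_two, digamma_add_one (ne_neg_natCast_of_pos one_pos), digamma_one, inv_one,
    neg_add_eq_sub]

theorem differentiableAt_log_Gamma {x : ℝ} (hx : ∀ m : ℕ, x ≠ -m) :
    DifferentiableAt ℝ (log ∘ Gamma) x :=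
  (differentiableAt_Gamma hx).log (Gamma_ne_zero hx)

theorem monotoneOn_digamma : MonotoneOn digamma (Set.Ioi 0) :=
  convexOn_log_Gamma.monotoneOn_deriv fun _ hx =>
    differentiableAt_log_Gamma (ne_neg_natCast_of_pos hx)

theorem strictMonoOn_digamma : StrictMonoOn digamma (Set.Ioi 0) := by
  intro x (hx : 0 < x) y (hy : 0 < y) hxy
  calc
    digamma x = digamma (x + 1) - x⁻¹ :=
      eq_sub_of_add_eq (digamma_add_one (ne_neg_natCast_of_pos hx)).symm
    _ < digamma (x + 1) - y⁻¹ := sub_lt_sub_left (inv_strictAnti₀ hx hxy) _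
    _ ≤ digamma (y + 1) - y⁻¹ :=
      sub_le_sub_right (monotoneOn_digamma (add_pos hx one_pos) (add_pos hy one_pos)
        (add_le_add_left hxy.le 1)) _
    _ = digamma y := sub_eq_of_eq_add (digamma_add_one (ne_neg_natCast_of_pos hy))

theorem strictConvexOn_log_Gamma : StrictConvexOn ℝ (Set.Ioi 0) (log ∘ Gamma) := by
  refine StrictMonoOn.strictConvexOn_of_deriv (convex_Ioi 0) (fun x hx => ?_) ?_
  · exact (differentiableAt_log_Gamma (ne_neg_natCast_of_pos hx)).continuousAt.continuousWithinAt
  · rw [interior_Ioi]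
    exact strictMonoOn_digamma

theorem slope_log_Gamma_add_one {x : ℝ} (hx : ∀ m : ℕ, x ≠ -m) :
    slope (log ∘ Gamma) x (x + 1) = log x := by
  have hx0 : x ≠ 0 := by simpa using hx 0
  rw [slope_def_field, add_sub_cancel_left, div_one, Function.comp_apply, Function.comp_apply,
    Gamma_add_one hx0, log_mul hx0 (Gamma_ne_zero hx), add_sub_cancel_right]

theorem log_lt_digamma_add_one {x : ℝ} (hx : 0 < x) : log x < digamma (x + 1) := by
  have hx1 : 0 < x + 1 := add_pos hx one_pos
  rw [← slope_log_Gamma_add_one (ne_neg_natCast_of_pos hx)]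
  exact strictConvexOn_log_Gamma.slope_lt_deriv hx hx1 (lt_add_one x)
    (differentiableAt_log_Gamma (ne_neg_natCast_of_pos hx1))

theorem lt_exp_digamma_add_one (x : ℝ) : x < exp (digamma (x + 1)) := by
  rcases le_or_gt x 0 with hx | hx
  · exact hx.trans_lt (exp_pos _)
  · exact (log_lt_iff_lt_exp hx).1 (log_lt_digamma_add_one hx)

theorem digamma_bounds_general
    (ψ : ℝ → ℝ) (hψ : ∀ x : ℝ, ψ x = deriv (fun s : ℝ => log (Gamma s)) x) :
    ∀ α : ℝ, α ∈ Set.Ioo (0 : ℝ) 2 →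
      1 - α < exp (ψ (2 - α)) ∧
      ψ (2 - α) < 1 - eulerMascheroniConstant ∧
      exp (ψ (2 - α)) < exp (1 - eulerMascheroniConstant) := by
  obtain rfl : ψ = digamma := funext hψ
  rintro α ⟨hα0, hα2⟩
  have hlower : 1 - α < exp (digamma (2 - α)) := by
    convert lt_exp_digamma_add_one (1 - α) using 3
    ring
  have hupper : digamma (2 - α) < 1 - eulerMascheroniConstant :=
    digamma_two ▸
      strictMonoOn_digamma (sub_pos.2 hα2) (Set.mem_Ioi.2 two_pos) (sub_lt_self 2 hα0)
  exact ⟨hlower, hupper, exp_lt_exp.2 hupper⟩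

/-- For the digamma function `ψ(x) = d/dx ln Γ(x)` and the
Euler–Mascheroni constant `γ`: for every `α ∈ (0,1)` one has
`1 - α < exp(ψ(2-α))`, `ψ(2-α) < 1 - γ`, and hence `exp(ψ(2-α)) < exp(1-γ)`. -/
theorem digamma_bounds
    (ψ : ℝ → ℝ) (hψ : ∀ x : ℝ, ψ x = deriv (fun s : ℝ => Real.log (Real.Gamma s)) x) :
    ∀ α : ℝ, α ∈ Set.Ioo (0 : ℝ) 1 →
      1 - α < Real.exp (ψ (2 - α)) ∧
      ψ (2 - α) < 1 - Real.eulerMascheroniConstant ∧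
      Real.exp (ψ (2 - α)) < Real.exp (1 - Real.eulerMascheroniConstant) :=
  fun α hα => digamma_bounds_general ψ hψ α ⟨hα.1, hα.2.trans one_lt_two⟩
end
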